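/- Let (Ω, μ) be a probability space, X ~ μ, and X₁, …, X_N independent copies of X. For every two measurable functions f, h : Ω → ℝ with finite first moments and every realization of (X_i)_{i=1}^N, one has W₁(F_{N,f+h}, F_{f+h}) ≤ W₁(F_{N,f}, F_f) + (1/N) Σ_{i=1}^N |h(X_i)| + 𝔼|h(X)|. -/

import Mathlib

open MeasureTheory

noncomputable section

variable {Ω : Type*} [MeasurableSpace Ω]

/-- The `L₂(μ)` norm of a function. -/
def L2norm (μ : Measure Ω) (f : Ω → ℝ) : ℝ := Real.sqrt (∫ ω, (f ω) ^ 2 ∂μ)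

/-- The `L_p(μ)` norm of a function. -/
def Lpnorm (μ : Measure Ω) (p : ℝ) (f : Ω → ℝ) : ℝ := (∫ ω, |f ω| ^ p ∂μ) ^ (1 / p)

/-- The empirical `L₂` norm `||f||_{L₂(P_N)} = ((1/N) Σ_i f(X_i)²)^{1/2}`. -/
def empL2 {N : ℕ} (xs : Fin N → Ω) (f : Ω → ℝ) : ℝ :=
  Real.sqrt ((1 / (N : ℝ)) * ∑ i, (f (xs i)) ^ 2)

/-- The empirical distribution function `F_{N,f}` of the sample `(f(X_i))_{i ≤ N}`. -/
def empCDF {N : ℕ} (xs : Fin N → Ω) (f : Ω → ℝ) (t : ℝ) : ℝ :=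
  (({i | f (xs i) ≤ t} : Set (Fin N)).ncard : ℝ) / N

/-- The distribution function `F_f(t) = μ(f ≤ t)` of `f` under `μ`. -/
def trueCDF (μ : Measure Ω) (f : Ω → ℝ) (t : ℝ) : ℝ := (μ {ω | f ω ≤ t}).toReal

/-- Wasserstein-1 distance between two distribution functions. -/
def W1 (F H : ℝ → ℝ) : ℝ := ∫ t : ℝ, |F t - H t|

/-- The radius `d_F = sup_{f ∈ F} ||f||_{L₂(μ)}` of a class of functions. -/
def radius (μ : Measure Ω) (F : Set (Ω → ℝ)) : ℝ := ⨆ f ∈ F, L2norm μ f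

/-- Generalized inverse (quantile function) of a distribution function. -/
def quantile (F : ℝ → ℝ) (u : ℝ) : ℝ := sInf {t : ℝ | u ≤ F t}

/-- The `i`-th coordinate of the monotone nondecreasing rearrangement `v^♯` of `v`. -/
def orderStat {N : ℕ} (v : Fin N → ℝ) (i : Fin N) : ℝ :=
  sInf {t : ℝ | (i : ℕ) + 1 ≤ ({j | v j ≤ t} : Set (Fin N)).ncard}

/-- Talagrand's `γ₂` functional of the set `T` with respect to the distance `dst`:
the infimum over admissible sequences `(T_s)` (subsets of `T` with `|T₀| = 1` and
`|T_s| ≤ 2^(2^s)`) of `sup_{t ∈ T} Σ_s 2^(s/2) dist(t, T_s)`. -/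
def gamma2 {E : Type*} (dst : E → E → ℝ) (T : Set E) : ℝ :=
  sInf {r : ℝ | ∃ Ts : ℕ → Set E,
    (∀ s, Ts s ⊆ T) ∧ (Ts 0).ncard = 1 ∧ (∀ s, (Ts s).Finite ∧ (Ts s).ncard ≤ 2 ^ 2 ^ s) ∧
    r = ⨆ t ∈ T, ∑' s : ℕ, (2 : ℝ) ^ ((s : ℝ) / 2) * sInf (dst t '' Ts s)}

/-- The `L₂(μ)` distance on functions. -/
def L2dist (μ : Measure Ω) (f h : Ω → ℝ) : ℝ := L2norm μ (f - h)

end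

/-!
The area between the distribution functions of `f` and `g` under one measure is at most the
`L₁` distance of `f` and `g`: at level `t` they differ by at most the mass of
`{f ≤ t} ∆ {g ≤ t}`, and by Tonelli the total over `t` is `∫ |f - g|`, since a given `ω` counts
exactly for the `t` between `f ω` and `g ω`. The theorem is the triangle inequality along
`F_{N,f+h}, F_{N,f}, F_f, F_{f+h}`, with the outer two distances estimated in this way under the
uniform measure on the sample indices and under `μ`.
-/

section Perturbation

open Set Filter Topology ProbabilityTheory
open scoped symmDiff

variable {Ω Ω' : Type*} [MeasurableSpace Ω] [MeasurableSpace Ω'] {μ : Measure Ω} {ν : Measure Ω'}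

lemma volume_Ici_symmDiff_Ici (a b : ℝ) : volume (Ici a ∆ Ici b) = ‖a - b‖ₑ := by
  wlog hab : a ≤ b generalizing a b
  · rw [symmDiff_comm, this b a (le_of_not_ge hab), enorm_sub_rev]
  rw [symmDiff_of_ge (Ici_subset_Ici.2 hab), Ici_sdiff_Ici, Real.volume_Ico, enorm_sub_rev,
    Real.enorm_of_nonneg (sub_nonneg.2 hab)]

lemma nullMeasurableSet_setOf_le_symmDiff_setOf_le {f g : Ω → ℝ}
    (hf : AEMeasurable f μ) (hg : AEMeasurable g μ) :
    NullMeasurableSet {p : ℝ × Ω | p.2 ∈ {ω | f ω ≤ p.1} ∆ {ω | g ω ≤ p.1}} (volume.prod μ) :=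
  (nullMeasurableSet_le hf.comp_snd measurable_fst.aemeasurable).symmDiff
    (nullMeasurableSet_le hg.comp_snd measurable_fst.aemeasurable)

lemma lintegral_measure_setOf_le_symmDiff_setOf_le [SFinite μ] {f g : Ω → ℝ}
    (hf : AEMeasurable f μ) (hg : AEMeasurable g μ) :
    ∫⁻ t : ℝ, μ ({ω | f ω ≤ t} ∆ {ω | g ω ≤ t}) = ∫⁻ ω, ‖f ω - g ω‖ₑ ∂μ := by
  have level_set (t : ℝ) : NullMeasurableSet ({ω | f ω ≤ t} ∆ {ω | g ω ≤ t}) μ :=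
    (nullMeasurableSet_le hf aemeasurable_const).symmDiff
      (nullMeasurableSet_le hg aemeasurable_const)
  calc ∫⁻ t : ℝ, μ ({ω | f ω ≤ t} ∆ {ω | g ω ≤ t})
      = ∫⁻ t : ℝ, ∫⁻ ω, ({ω | f ω ≤ t} ∆ {ω | g ω ≤ t}).indicator 1 ω ∂μ :=
        lintegral_congr fun t ↦ (lintegral_indicator_one₀ (level_set t)).symm
    _ = ∫⁻ ω, (∫⁻ t : ℝ, ({ω | f ω ≤ t} ∆ {ω | g ω ≤ t}).indicator 1 ω) ∂μ :=
        lintegral_lintegral_swap <| aemeasurable_const.indicator₀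
          (nullMeasurableSet_setOf_le_symmDiff_setOf_le hf hg)
    _ = ∫⁻ ω, (∫⁻ t, (Ici (f ω) ∆ Ici (g ω)).indicator 1 t) ∂μ := rfl
    _ = ∫⁻ ω, ‖f ω - g ω‖ₑ ∂μ := lintegral_congr fun ω ↦ by
        rw [lintegral_indicator_one (measurableSet_Ici.symmDiff measurableSet_Ici),
          volume_Ici_symmDiff_Ici]

lemma monotone_trueCDF [IsFiniteMeasure μ] (f : Ω → ℝ) : Monotone (trueCDF μ f) :=
  fun _ _ hst ↦ measureReal_mono fun _ hω ↦ le_trans hω hst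

lemma enorm_trueCDF_sub_trueCDF_le [IsFiniteMeasure μ] {f g : Ω → ℝ}
    (hf : AEMeasurable f μ) (hg : AEMeasurable g μ) (t : ℝ) :
    ‖trueCDF μ f t - trueCDF μ g t‖ₑ ≤ μ ({ω | f ω ≤ t} ∆ {ω | g ω ≤ t}) := by
  rw [Real.enorm_eq_ofReal_abs, ← ofReal_measureReal]
  exact ENNReal.ofReal_le_ofReal <| abs_measureReal_sub_le_measureReal_symmDiff
    (nullMeasurableSet_le hf aemeasurable_const) (nullMeasurableSet_le hg aemeasurable_const)

lemma lintegral_enorm_trueCDF_sub_trueCDF_le [IsFiniteMeasure μ] {f g : Ω → ℝ}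
    (hf : AEMeasurable f μ) (hg : AEMeasurable g μ) :
    ∫⁻ t, ‖trueCDF μ f t - trueCDF μ g t‖ₑ ≤ ∫⁻ ω, ‖f ω - g ω‖ₑ ∂μ :=
  (lintegral_mono (enorm_trueCDF_sub_trueCDF_le hf hg)).trans_eq
    (lintegral_measure_setOf_le_symmDiff_setOf_le hf hg)

lemma integrable_trueCDF_sub_trueCDF_of_integrable_sub [IsFiniteMeasure μ] {f g : Ω → ℝ}
    (hf : AEMeasurable f μ) (hg : AEMeasurable g μ) (hfg : Integrable (f - g) μ) :
    Integrable (trueCDF μ f - trueCDF μ g) :=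
  ⟨((monotone_trueCDF f).measurable.sub (monotone_trueCDF g).measurable).aestronglyMeasurable,
    (lintegral_enorm_trueCDF_sub_trueCDF_le hf hg).trans_lt hfg.2⟩

lemma W1_trueCDF_le_integral_abs_sub [IsFiniteMeasure μ] {f g : Ω → ℝ}
    (hf : AEMeasurable f μ) (hg : AEMeasurable g μ) (hfg : Integrable (f - g) μ) :
    W1 (trueCDF μ f) (trueCDF μ g) ≤ ∫ ω, |f ω - g ω| ∂μ :=
  calc W1 (trueCDF μ f) (trueCDF μ g)
      = (∫⁻ t, ‖trueCDF μ f t - trueCDF μ g t‖ₑ).toReal :=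
        integral_norm_eq_lintegral_enorm
          (integrable_trueCDF_sub_trueCDF_of_integrable_sub hf hg hfg).1
    _ ≤ (∫⁻ ω, ‖f ω - g ω‖ₑ ∂μ).toReal :=
        ENNReal.toReal_mono hfg.2.ne (lintegral_enorm_trueCDF_sub_trueCDF_le hf hg)
    _ = ∫ ω, |f ω - g ω| ∂μ := (integral_norm_eq_lintegral_enorm hfg.1).symm

lemma W1_trueCDF_add_le_integral_abs [IsFiniteMeasure μ] {f h : Ω → ℝ} (hf : AEMeasurable f μ)
    (hh : Integrable h μ) : W1 (trueCDF μ (f + h)) (trueCDF μ f) ≤ ∫ ω, |h ω| ∂μ := by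
  have h_sub : Integrable (f + h - f) μ := by rwa [add_sub_cancel_left]
  simpa only [Pi.add_apply, add_sub_cancel_left] using
    W1_trueCDF_le_integral_abs_sub (hf.add hh.aemeasurable) hf h_sub

lemma trueCDF_zero [IsProbabilityMeasure μ] : trueCDF μ 0 = (Ici 0).indicator 1 := by
  funext t
  by_cases ht : 0 ≤ t <;> simp [trueCDF, ht]

lemma integrable_trueCDF_sub_indicator_Ici [IsProbabilityMeasure μ] {f : Ω → ℝ}
    (hf : Integrable f μ) : Integrable (trueCDF μ f - (Ici 0).indicator 1) := by
  rw [← trueCDF_zero (μ := μ)]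
  exact integrable_trueCDF_sub_trueCDF_of_integrable_sub hf.aemeasurable aemeasurable_zero
    (by simpa only [sub_zero] using hf)

lemma integrable_trueCDF_sub_trueCDF [IsProbabilityMeasure μ] [IsProbabilityMeasure ν]
    {f : Ω → ℝ} {g : Ω' → ℝ} (hf : Integrable f μ) (hg : Integrable g ν) :
    Integrable (trueCDF μ f - trueCDF ν g) := by
  simpa only [sub_sub_sub_cancel_right] using
    (integrable_trueCDF_sub_indicator_Ici hf).sub (integrable_trueCDF_sub_indicator_Ici hg)

lemma W1_nonneg (F G : ℝ → ℝ) : 0 ≤ W1 F G := integral_nonneg fun _ ↦ abs_nonneg _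

lemma W1_comm (F G : ℝ → ℝ) : W1 F G = W1 G F := by
  simp only [W1, abs_sub_comm]

lemma W1_triangle {F G H : ℝ → ℝ} (hFG : Integrable (F - G)) (hGH : Integrable (G - H)) :
    W1 F H ≤ W1 F G + W1 G H := by
  have hFH : Integrable (F - H) := by simpa only [sub_add_sub_cancel] using hFG.add hGH
  calc W1 F H ≤ ∫ t, (|F t - G t| + |G t - H t|) :=
        integral_mono hFH.abs (hFG.abs.add hGH.abs) fun t ↦ abs_sub_le (F t) (G t) (H t)
    _ = W1 F G + W1 G H := integral_add hFG.abs hGH.abs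

theorem W1_trueCDF_add_trueCDF_add_le [IsProbabilityMeasure μ] [IsProbabilityMeasure ν]
    {f h : Ω → ℝ} {f' h' : Ω' → ℝ} (hf : Integrable f μ) (hh : Integrable h μ)
    (hf' : Integrable f' ν) (hh' : Integrable h' ν) :
    W1 (trueCDF μ (f + h)) (trueCDF ν (f' + h')) ≤
      W1 (trueCDF μ f) (trueCDF ν f') + ∫ ω, |h ω| ∂μ + ∫ ω, |h' ω| ∂ν := by
  have dist_μ : W1 (trueCDF μ (f + h)) (trueCDF μ f) ≤ ∫ ω, |h ω| ∂μ :=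
    W1_trueCDF_add_le_integral_abs hf.aemeasurable hh
  have dist_ν : W1 (trueCDF ν f') (trueCDF ν (f' + h')) ≤ ∫ ω, |h' ω| ∂ν :=
    (W1_comm _ _).trans_le (W1_trueCDF_add_le_integral_abs hf'.aemeasurable hh')
  have via_f : W1 (trueCDF μ (f + h)) (trueCDF ν (f' + h')) ≤
      W1 (trueCDF μ (f + h)) (trueCDF μ f) + W1 (trueCDF μ f) (trueCDF ν (f' + h')) :=
    W1_triangle (integrable_trueCDF_sub_trueCDF (hf.add hh) hf)
      (integrable_trueCDF_sub_trueCDF hf (hf'.add hh'))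
  have via_f' : W1 (trueCDF μ f) (trueCDF ν (f' + h')) ≤
      W1 (trueCDF μ f) (trueCDF ν f') + W1 (trueCDF ν f') (trueCDF ν (f' + h')) :=
    W1_triangle (integrable_trueCDF_sub_trueCDF hf hf')
      (integrable_trueCDF_sub_trueCDF hf' (hf'.add hh'))
  linarith

lemma integral_uniformOn_univ {ι E : Type*} [Fintype ι] [MeasurableSpace ι]
    [MeasurableSingletonClass ι] [NormedAddCommGroup E] [NormedSpace ℝ E] [CompleteSpace E]
    (v : ι → E) : ∫ i, v i ∂uniformOn univ = (Fintype.card ι : ℝ)⁻¹ • ∑ i, v i := by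
  simp [uniformOn, ProbabilityTheory.cond, integral_smul_measure, integral_count]

lemma empCDF_eq_trueCDF_uniformOn {α : Type*} {N : ℕ} (xs : Fin N → α) (f : α → ℝ) :
    empCDF xs f = trueCDF (uniformOn univ) (f ∘ xs) := by
  funext t
  simp [empCDF, trueCDF, uniformOn_univ, Measure.count_apply, ncard_eq_toFinset_card',
    encard_eq_coe_toFinset_card]

lemma tendsto_trueCDF_atTop [IsFiniteMeasure μ] (f : Ω → ℝ) :
    Tendsto (trueCDF μ f) atTop (𝓝 (μ.real univ)) := by
  have exhaust : ⋃ t, {ω | f ω ≤ t} = univ := iUnion_eq_univ_iff.2 fun ω ↦ ⟨f ω, le_refl (f ω)⟩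
  have tendsto_measure : Tendsto (fun t ↦ μ {ω | f ω ≤ t}) atTop (𝓝 (μ univ)) := by
    rw [← exhaust]
    exact tendsto_measure_iUnion_atTop fun _ _ hst _ hω ↦ le_trans hω hst
  exact (ENNReal.tendsto_toReal (measure_ne_top μ univ)).comp tendsto_measure

lemma not_integrable_trueCDF [IsFiniteMeasure μ] [NeZero μ] (f : Ω → ℝ) :
    ¬ Integrable (trueCDF μ f) := fun hint ↦ by
  have volume_eq_top (s : Set ℝ) (hs : s ∈ atTop) : volume s = ⊤ := by
    obtain ⟨a, ha⟩ := mem_atTop_sets.1 hs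
    exact measure_mono_top ha Real.volume_Ici
  exact measureReal_univ_ne_zero (μ := μ) <|
    (hint.integrableAtFilter atTop).eq_zero_of_tendsto volume_eq_top (tendsto_trueCDF_atTop f)

-- An empty sample has `empCDF = 0 / 0 = 0`, and the divergent integral defining `W1` is then `0`.
lemma W1_empCDF_trueCDF_fin_zero [IsFiniteMeasure μ] [NeZero μ] (xs : Fin 0 → Ω)
    (f : Ω → ℝ) : W1 (empCDF xs f) (trueCDF μ f) = 0 := by
  have abs_sub_eq : (fun t ↦ |empCDF xs f t - trueCDF μ f t|) = trueCDF μ f := by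
    funext t
    simp [empCDF, trueCDF]
  rw [W1, abs_sub_eq, integral_undef (not_integrable_trueCDF f)]

end Perturbation

theorem stmt9 {Ω : Type*} [MeasurableSpace Ω] (μ : Measure Ω) [IsProbabilityMeasure μ]
    (N : ℕ) (f h : Ω → ℝ) (hf : Measurable f) (hh : Measurable h)
    (hfi : Integrable f μ) (hhi : Integrable h μ) (xs : Fin N → Ω) :
    W1 (empCDF xs (f + h)) (trueCDF μ (f + h)) ≤
      W1 (empCDF xs f) (trueCDF μ f) + (1 / (N : ℝ)) * ∑ i, |h (xs i)| + ∫ ω, |h ω| ∂μ := by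
  obtain rfl | _ := eq_zero_or_neZero N
  · rw [W1_empCDF_trueCDF_fin_zero, Fin.sum_univ_zero, mul_zero, add_zero]
    exact add_nonneg (W1_nonneg _ _) (integral_nonneg fun _ ↦ abs_nonneg _)
  · have sample_mean : ∫ i, |h (xs i)| ∂ProbabilityTheory.uniformOn Set.univ =
        (1 / (N : ℝ)) * ∑ i, |h (xs i)| := by
      rw [integral_uniformOn_univ, Fintype.card_fin, smul_eq_mul, one_div]
    rw [empCDF_eq_trueCDF_uniformOn, empCDF_eq_trueCDF_uniformOn, ← sample_mean]
    exact W1_trueCDF_add_trueCDF_add_le .of_finite .of_finite hfi hhi
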